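/- Let d, k ≥ 1 be integers. There exists a constant C = C(k, d) such that for all x ∈ (ℤ^d)^k and all t ≥ 0, Σ_{z ∈ (ℤ^d)^k} |p_t^{rw}(x,z) − p_t^{rw}(x + e₁₁, z)| ≤ C / (√t + 1). -/

import Mathlib

open scoped Classical

noncomputable section

namespace SSEPPaper

/-- Configurations of `k` labelled particles on `ℤ^d`. -/
abbrev Conf (d k : ℕ) := Fin k → Fin d → ℤ

/-- Euclidean norm of an integer vector in `ℤ^d`. -/
def vnorm {d : ℕ} (v : Fin d → ℤ) : ℝ := Real.sqrt (∑ j, ((v j : ℝ)) ^ 2)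

/-- Euclidean norm on `(ℝ^d)^k` of an integer configuration. -/
def cnorm {d k : ℕ} (x : Conf d k) : ℝ := Real.sqrt (∑ i, ∑ j, ((x i j : ℝ)) ^ 2)

/-- The set `𝕊^k` of configurations with pairwise distinct particle positions. -/
def SSet (d k : ℕ) : Set (Conf d k) := {x | ∀ i j : Fin k, i ≠ j → x i ≠ x j}

/-- Swap of the coordinates `i` and `j` of a configuration, i.e. `σ^{i,j}x`. -/
def cswap {d k : ℕ} (i j : Fin k) (x : Conf d k) : Conf d k := x ∘ Equiv.swap i j

/-- `δ^{i,j}w`: the configuration which agrees with `w` except that its `j`-th coordinate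
is replaced by `w i`. -/
def cdelta {d k : ℕ} (i j : Fin k) (w : Conf d k) : Conf d k := Function.update w j (w i)

/-- Kronecker delta function at `y`. -/
def deltaFn {α : Type*} (y : α) : α → ℝ := fun x => if x = y then 1 else 0

/-- Generator of the labelled exclusion process, extended to all of `(ℤ^d)^k`. -/
def Lexc {d k : ℕ} (f : Conf d k → ℝ) : Conf d k → ℝ := fun x =>
  (∑' y : Conf d k, if cnorm (y - x) = 1 ∧ y ∈ SSet d k then f y - f x else 0) +
    ∑ i : Fin k, ∑ j : Fin k,
      if i < j ∧ vnorm (x i - x j) = 1 ∧ x ∈ SSet d k then f (cswap i j x) - f x else 0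

/-- Generator of `k` independent simple random walks on `ℤ^d`. -/
def Lrw {d k : ℕ} (f : Conf d k → ℝ) : Conf d k → ℝ := fun x =>
  ∑' z : Conf d k, if cnorm (z - x) = 1 then f z - f x else 0

/-- Generator (discrete Laplacian) of a single simple random walk on `ℤ^d`. -/
def Lap {d : ℕ} (f : (Fin d → ℤ) → ℝ) : (Fin d → ℤ) → ℝ := fun x =>
  ∑' y : Fin d → ℤ, if vnorm (y - x) = 1 then f y - f x else 0

/-- Transition probabilities `p_t^ℓ(x,y) = (e^{tL^ℓ} δ_y)(x)` of the labelled exclusion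
process, given by the exponential power series of the generator. -/
def ptl {d k : ℕ} (t : ℝ) (x y : Conf d k) : ℝ :=
  ∑' n : ℕ, t ^ n / n.factorial * ((Lexc (d := d) (k := k))^[n] (deltaFn y)) x

/-- Transition probabilities `p_t^{rw}(x,y) = (e^{tL^{rw}} δ_y)(x)` of `k` independent
simple random walks on `ℤ^d`. -/
def ptrw {d k : ℕ} (t : ℝ) (x y : Conf d k) : ℝ :=
  ∑' n : ℕ, t ^ n / n.factorial * ((Lrw (d := d) (k := k))^[n] (deltaFn y)) x

/-- Transition probabilities `p_t(x,y) = (e^{tΔ} δ_y)(x)` of a single continuous-time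
simple random walk on `ℤ^d`. -/
def pt1 {d : ℕ} (t : ℝ) (x y : Fin d → ℤ) : ℝ :=
  ∑' n : ℕ, t ^ n / n.factorial * ((Lap (d := d))^[n] (deltaFn y)) x

/-- The configuration `e₁₁ = ((1,0,…,0),(0,…,0),…,(0,…,0))`. -/
def e11 (d k : ℕ) : Conf d k := fun i j => if i.val = 0 ∧ j.val = 0 then 1 else 0

section Helpers

open NormedSpace

variable {A : Type*} [NormedRing A] [NormedAlgebra ℝ A] [CompleteSpace A] [NormOneClass A]

lemma my_exp_hasSum (t : ℝ) (U : A) :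
    HasSum (fun n : ℕ => (t ^ n / n.factorial) • U ^ n) (exp (t • U)) := by
  have h := exp_series_hasSum_exp' (𝕂 := ℝ) (t • U)
  convert h using 2 with n
  rw [smul_pow, smul_smul]
  congr 1
  field_simp

lemma my_exp_add {x y : A} (h : Commute x y) : exp (x + y) = exp x * exp y := by
  let _ : NormedAlgebra ℚ A := NormedAlgebra.restrictScalars ℚ ℝ A
  exact exp_add_of_commute h

lemma my_real_hasSum (t : ℝ) :
    HasSum (fun n : ℕ => t ^ n / n.factorial) (Real.exp t) := by
  have h := expSeries_div_hasSum_exp (𝔸 := ℝ) t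
  rwa [← Real.exp_eq_exp_ℝ] at h

lemma my_exp_smul_one (s : ℝ) : exp (s • (1 : A)) = (Real.exp s) • (1 : A) := by
  have h := my_exp_hasSum (A := A) s 1
  simp only [one_pow] at h
  exact h.unique ((my_real_hasSum s).smul_const (1 : A))

lemma my_norm_exp_le (t : ℝ) (ht : 0 ≤ t) (U : A) (c : ℝ) (hU : ‖U‖ ≤ c) :
    ‖exp (t • U)‖ ≤ Real.exp (t * c) := by
  refine (my_exp_hasSum t U).norm_le_of_bounded (my_real_hasSum (t * c)) fun n => ?_
  rw [norm_smul, Real.norm_of_nonneg (by positivity), mul_pow, mul_div_right_comm]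
  gcongr
  exact (norm_pow_le U n).trans (by gcongr)

/-- contraction property -/
lemma my_norm_exp_sub_le (t : ℝ) (ht : 0 ≤ t) (U : A) (c : ℝ) (hU : ‖U‖ ≤ c) :
    ‖exp (t • (U - c • (1 : A)))‖ ≤ 1 := by
  have h1 : t • (U - c • (1 : A)) = t • U + (-(t * c)) • (1 : A) := by
    rw [smul_sub, smul_smul, neg_smul, sub_eq_add_neg]
  rw [h1, my_exp_add ((Commute.one_right _).smul_right _), my_exp_smul_one, mul_smul_comm, mul_one,
    norm_smul, Real.norm_of_nonneg (Real.exp_nonneg _)]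
  calc _ ≤ Real.exp (-(t * c)) * Real.exp (t * c) := by
        gcongr
        exact my_norm_exp_le t ht U c hU
    _ = 1 := by rw [← Real.exp_add]; simp

lemma my_poisson (t : ℝ) (ht : 0 < t) :
    HasSum (fun n : ℕ => t ^ n / n.factorial * (1 - n / t) ^ 2) (Real.exp t / t) := by
  have h0 := my_real_hasSum t
  have e1 : ∀ n : ℕ, t ^ (n + 1) / ((n + 1).factorial : ℝ) * ((n + 1 : ℕ) : ℝ)
      = t * (t ^ n / n.factorial) := by
    intro n
    rw [Nat.factorial_succ]; push_cast; field_simp; try ring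
  have h1 : HasSum (fun n : ℕ => t ^ n / n.factorial * (n : ℝ)) (t * Real.exp t) := by
    rw [← hasSum_nat_add_iff' 1]
    simp only [e1]
    simpa using h0.mul_left t
  have h2 : HasSum (fun n : ℕ => t ^ n / n.factorial * (n : ℝ) ^ 2)
      (t * (t * Real.exp t + Real.exp t)) := by
    rw [← hasSum_nat_add_iff' 1]
    simp only [pow_two, ← mul_assoc, e1]
    have := (h1.add h0).mul_left t
    simp only [Finset.range_one, Finset.sum_singleton]
    convert this using 1
    · rfl
    · funext n
      push_cast; ring
    · simp
  have h3 := (h0.sub (h1.mul_left (2 / t))).add (h2.mul_left (1 / t ^ 2))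
  convert h3 using 1
  · rfl
  · funext n
    field_simp
    try ring
  · field_simp
    try ring

lemma my_key (t : ℝ) (ht : 0 < t) (U : A) (hU : ‖U‖ ≤ 1) :
    ‖(1 - U) * exp (t • (U - 1))‖ ≤ 1 / Real.sqrt t := by
  have hs : 0 < Real.sqrt t := Real.sqrt_pos.2 ht
  have hss : Real.sqrt t ^ 2 = t := Real.sq_sqrt ht.le
  have h0 := my_exp_hasSum t U
  have h1 : HasSum (fun n : ℕ => (t ^ n / n.factorial * (n / t)) • U ^ n)
      (U * exp (t • U)) := by
    rw [← hasSum_nat_add_iff' 1]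
    have := h0.mul_left U
    simp only [Finset.range_one, Finset.sum_singleton]
    convert this using 1
    · rfl
    · funext n
      rw [mul_smul_comm, ← pow_succ']
      congr 1
      rw [Nat.factorial_succ]; push_cast; field_simp; ring
    · simp
  have h2 := h0.sub h1
  have h3 : ‖exp (t • U) - U * exp (t • U)‖ ≤ Real.exp t * (1 / Real.sqrt t) := by
    have hb := (((my_real_hasSum t).mul_left (1 / Real.sqrt t)).add
      ((my_poisson t ht).mul_left (Real.sqrt t))).mul_left (1 / 2)
    have he : (1 / 2 : ℝ) * (1 / Real.sqrt t * Real.exp t + Real.sqrt t * (Real.exp t / t))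
        = Real.exp t * (1 / Real.sqrt t) := by
      rw [show Real.exp t / t = Real.exp t / Real.sqrt t ^ 2 by rw [hss]]
      field_simp
      try ring
    rw [he] at hb
    refine h2.norm_le_of_bounded hb fun n => ?_
    rw [← sub_smul, norm_smul]
    have ha : 0 ≤ t ^ n / (n.factorial : ℝ) := by positivity
    set a := t ^ n / (n.factorial : ℝ)
    have hp : ‖U ^ n‖ ≤ 1 := (norm_pow_le U n).trans (pow_le_one₀ (norm_nonneg _) hU)
    have hx : a - a * (n / t) = a * (1 - n / t) := by ring
    rw [hx, norm_mul, Real.norm_of_nonneg ha, Real.norm_eq_abs]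
    set y : ℝ := 1 - n / t
    have hy : |y| ≤ 1 / 2 * (1 / Real.sqrt t + Real.sqrt t * y ^ 2) := by
      have h4 : 0 ≤ (1 - Real.sqrt t * |y|) ^ 2 := sq_nonneg _
      have h5 : y ^ 2 = |y| ^ 2 := (sq_abs y).symm
      rw [h5]
      rw [← sub_nonneg]
      have : 1 / 2 * (1 / Real.sqrt t + Real.sqrt t * |y| ^ 2) - |y|
        = (1 - Real.sqrt t * |y|) ^ 2 / (2 * Real.sqrt t) := by
        field_simp; ring
      rw [this]; positivity
    calc a * |y| * ‖U ^ n‖ ≤ a * |y| * 1 := by gcongr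
      _ ≤ a * (1 / 2 * (1 / Real.sqrt t + Real.sqrt t * y ^ 2)) := by rw [mul_one]; gcongr
      _ = _ := by ring
  have h1 : t • (U - 1) = t • U + (-t) • (1 : A) := by
    rw [smul_sub, neg_smul, sub_eq_add_neg]
  rw [h1, my_exp_add ((Commute.one_right _).smul_right _), my_exp_smul_one, mul_smul_comm, mul_one,
    mul_smul_comm, norm_smul, Real.norm_of_nonneg (Real.exp_nonneg _), sub_mul, one_mul]
  calc _ ≤ Real.exp (-t) * (Real.exp t * (1 / Real.sqrt t)) := by gcongr
    _ = _ := by rw [← mul_assoc, ← Real.exp_add]; simp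

lemma my_main (t : ℝ) (ht : 0 ≤ t) (U V : A) (c : ℝ) (hU : ‖U‖ ≤ 1) (hV : ‖V‖ ≤ c)
    (hUV : Commute U V) :
    ‖(1 - U) * exp (t • ((U - 1) + (V - c • (1 : A))))‖ ≤ 3 / (Real.sqrt t + 1) := by
  have hc : Commute (t • (U - 1)) (t • (V - c • (1 : A))) := by
    refine Commute.smul_left (Commute.smul_right ?_ _) _
    refine Commute.sub_left (Commute.sub_right hUV ?_) (Commute.one_left _)
    exact (Commute.one_right _).smul_right _
  have hB := my_norm_exp_sub_le t ht V c hV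
  have hA : ‖exp (t • (U - 1))‖ ≤ 1 := by
    have := my_norm_exp_sub_le t ht U 1 hU
    rwa [one_smul] at this
  have h1U : ‖1 - U‖ ≤ 2 := (norm_sub_le _ _).trans (by rw [norm_one]; linarith)
  have h2 : ‖(1 - U) * exp (t • (U - 1))‖ ≤ 2 :=
    (norm_mul_le _ _).trans (by nlinarith [norm_nonneg (1 - U), norm_nonneg (exp (t • (U - 1)))])
  have h3 : ‖(1 - U) * exp (t • (U - 1))‖ ≤ 3 / (Real.sqrt t + 1) := by
    rw [le_div_iff₀ (by positivity)]
    rcases ht.eq_or_lt with h | h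
    · rw [← h] at h2 ⊢
      rw [Real.sqrt_zero]
      linarith
    · have := my_key t h U hU
      rw [le_div_iff₀ (Real.sqrt_pos.2 h)] at this
      linarith
  rw [smul_add, my_exp_add hc, ← mul_assoc]
  refine (norm_mul_le _ _).trans ?_
  calc _ ≤ 3 / (Real.sqrt t + 1) * 1 := by gcongr
    _ = _ := mul_one _

end Helpers

section Ops

open BoundedContinuousFunction

variable {d k : ℕ}

/-- Bounded functions on configurations. -/
def BF (d k : ℕ) : Type := BoundedContinuousFunction (Conf d k) ℝ

instance : NormedAddCommGroup (BF d k) :=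
  inferInstanceAs (NormedAddCommGroup (BoundedContinuousFunction (Conf d k) ℝ))

instance : NormedSpace ℝ (BF d k) :=
  inferInstanceAs (NormedSpace ℝ (BoundedContinuousFunction (Conf d k) ℝ))

instance : CompleteSpace (BF d k) :=
  inferInstanceAs (CompleteSpace (BoundedContinuousFunction (Conf d k) ℝ))

instance : FunLike (BF d k) (Conf d k) ℝ :=
  inferInstanceAs (FunLike (BoundedContinuousFunction (Conf d k) ℝ) (Conf d k) ℝ)

/-- Evaluation at a configuration. -/
def evL (x : Conf d k) : BF d k →L[ℝ] ℝ :=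
  (BoundedContinuousFunction.evalCLM ℝ x : BoundedContinuousFunction (Conf d k) ℝ →L[ℝ] ℝ)

lemma evL_apply (x : Conf d k) (f : BF d k) : evL x f = f x := rfl

lemma BF_norm_apply (f : BF d k) (x : Conf d k) : ‖f x‖ ≤ ‖f‖ :=
  BoundedContinuousFunction.norm_coe_le_norm (α := Conf d k) (β := ℝ) f x

lemma BF_norm_le {f : BF d k} {C : ℝ} (hC : 0 ≤ C) (h : ∀ x, ‖f x‖ ≤ C) : ‖f‖ ≤ C :=
  (BoundedContinuousFunction.norm_le (α := Conf d k) (β := ℝ) hC).2 h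

lemma BF_sum {ι : Type*} (s : Finset ι) (f : ι → BF d k) (x : Conf d k) :
    (∑ i ∈ s, f i) x = ∑ i ∈ s, f i x := by
  simp only [← evL_apply, map_sum]

lemma BF_ext {f g : BF d k} (h : ∀ x, f x = g x) : f = g := DFunLike.ext f g h

/-- Translation operator. -/
def Tr (g : Conf d k) : BF d k →L[ℝ] BF d k :=
  LinearMap.mkContinuous
    { toFun := fun f => (BoundedContinuousFunction.compContinuous (α := Conf d k) (β := ℝ) f
        ⟨fun x => x + g, continuous_of_discreteTopology⟩ :)
      map_add' := fun _ _ => rfl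
      map_smul' := fun _ _ => rfl } 1 (fun f => by
        rw [one_mul]
        exact BF_norm_le (norm_nonneg f) fun x => BF_norm_apply f _)

lemma Tr_apply (g : Conf d k) (f : BF d k) (x : Conf d k) : Tr g f x = f (x + g) := rfl

lemma Tr_norm (g : Conf d k) : ‖Tr g‖ ≤ 1 := LinearMap.mkContinuous_norm_le _ zero_le_one _

lemma Tr_comm (g h : Conf d k) : Commute (Tr g) (Tr h) := by
  refine ContinuousLinearMap.ext fun f => BF_ext fun x => ?_
  simp only [mul_apply_eq_comp, Tr_apply]
  congr 1
  abel

lemma S_finite : {g : Conf d k | cnorm g = 1}.Finite := by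
  refine (Set.finite_Icc (-1 : Conf d k) 1).subset fun g hg => ?_
  have h1 : ∑ i, ∑ j, ((g i j : ℝ)) ^ 2 = 1 := by
    have hg : Real.sqrt _ = 1 := hg
    rwa [Real.sqrt_eq_one] at hg
  have h2 : ∀ i j, |g i j| ≤ 1 := by
    intro i j
    have a1 : ((g i j : ℝ)) ^ 2 ≤ ∑ j, ((g i j : ℝ)) ^ 2 :=
      Finset.single_le_sum (f := fun j => ((g i j : ℝ)) ^ 2) (fun _ _ => sq_nonneg _)
        (Finset.mem_univ j)
    have a2 : ∑ j, ((g i j : ℝ)) ^ 2 ≤ ∑ i, ∑ j, ((g i j : ℝ)) ^ 2 :=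
      Finset.single_le_sum (f := fun i => ∑ j, ((g i j : ℝ)) ^ 2)
        (fun _ _ => Finset.sum_nonneg fun _ _ => sq_nonneg _) (Finset.mem_univ i)
    have a3 : ((g i j : ℝ)) ^ 2 ≤ 1 := by linarith
    exact (sq_le_one_iff_abs_le_one _).1 (by exact_mod_cast a3)
  exact ⟨fun i j => (abs_le.1 (h2 i j)).1, fun i j => (abs_le.1 (h2 i j)).2⟩

/-- The set of unit steps. -/
def SF (d k : ℕ) : Finset (Conf d k) := (S_finite (d := d) (k := k)).toFinset

lemma mem_SF (g : Conf d k) : g ∈ SF d k ↔ cnorm g = 1 := by simp [SF]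

lemma e11_mem (hd : 1 ≤ d) (hk : 1 ≤ k) : e11 d k ∈ SF d k := by
  rw [mem_SF, cnorm, Real.sqrt_eq_one]
  rw [Finset.sum_eq_single (⟨0, hk⟩ : Fin k), Finset.sum_eq_single (⟨0, hd⟩ : Fin d)]
  · simp [e11]
  · intro b _ hb
    have : b.val ≠ 0 := fun h => hb (Fin.ext h)
    simp [e11, this]
  · simp
  · intro b _ hb
    have : b.val ≠ 0 := fun h => hb (Fin.ext h)
    simp [e11, this]
  · simp

/-- The generator as a bounded operator. -/
def LB (d k : ℕ) : BF d k →L[ℝ] BF d k := ∑ g ∈ SF d k, (Tr g - 1)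

lemma Lrw_eq (f : Conf d k → ℝ) (x : Conf d k) :
    Lrw f x = ∑ g ∈ SF d k, (f (x + g) - f x) := by
  unfold Lrw
  rw [← (Equiv.addLeft x).tsum_eq]
  rw [tsum_eq_sum (s := SF d k)]
  · refine Finset.sum_congr rfl fun g hg => ?_
    rw [mem_SF] at hg
    simp [hg]
  · intro g hg
    rw [mem_SF] at hg
    simp [hg]

lemma LB_apply (f : BF d k) : ⇑(LB d k f) = Lrw ⇑f := by
  ext x
  rw [Lrw_eq, LB, _root_.sum_apply, BF_sum]
  rfl

lemma LB_pow (n : ℕ) (f : BF d k) : ⇑((LB d k ^ n) f) = (Lrw (d := d) (k := k))^[n] ⇑f := by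
  induction n with
  | zero => rfl
  | succ n ih =>
    rw [pow_succ', Function.iterate_succ_apply', mul_apply_eq_comp, LB_apply, ih]

/-- Kronecker delta as a bounded function. -/
def dl (z : Conf d k) : BF d k :=
  BoundedContinuousFunction.ofNormedAddCommGroup (deltaFn z) continuous_of_discreteTopology 1
    (fun x => by unfold deltaFn; split_ifs <;> simp)

lemma dl_coe (z : Conf d k) : ⇑(dl z) = deltaFn z := rfl

instance : Nontrivial (BF d k) := by
  refine ⟨dl 0, 0, fun h => ?_⟩
  have h1 := congrArg (evL 0) h
  rw [map_zero, evL_apply, dl_coe] at h1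
  simp [deltaFn] at h1

lemma ptrw_eq (t : ℝ) (x z : Conf d k) :
    ptrw t x z = (NormedSpace.exp (t • LB d k)) (dl z) x := by
  have h := my_exp_hasSum t (LB d k)
  have h2 := h.mapL ((evL x).comp
    (ContinuousLinearMap.apply ℝ (BF d k) (dl z)))
  unfold ptrw
  rw [← dl_coe]
  simp only [← LB_pow]
  exact h2.tsum_eq

lemma sum_abs_le (B : BF d k →L[ℝ] BF d k) (M : ℝ) (hB : ‖B‖ ≤ M) (x : Conf d k)
    (F : Finset (Conf d k)) : ∑ z ∈ F, |B (dl z) x| ≤ M := by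
  let s : Conf d k → ℝ := fun z => SignType.sign (B (dl z) x)
  let f : BF d k := ∑ z ∈ F, s z • dl z
  have hs : ∀ z, |s z| ≤ 1 := by
    intro z
    simp only [s]
    rcases SignType.sign (B (dl z) x) with _ | _ | _ <;> simp
  have hf : ‖f‖ ≤ 1 := by
    refine BF_norm_le zero_le_one fun y => ?_
    have : f y = ∑ z ∈ F, s z * deltaFn z y := by
      simp only [f]
      rw [BF_sum]
      rfl
    rw [this]
    simp only [deltaFn, mul_ite, mul_one, mul_zero, Finset.sum_ite_eq]
    split_ifs
    · exact hs y
    · simp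
  have h1 : B f x = ∑ z ∈ F, |B (dl z) x| := by
    simp only [f]
    rw [map_sum, BF_sum]
    refine Finset.sum_congr rfl fun z _ => ?_
    rw [map_smul]
    exact sign_mul_self _
  rw [← h1]
  calc B f x ≤ ‖B f x‖ := le_abs_self _
    _ ≤ ‖B f‖ := BF_norm_apply _ x
    _ ≤ ‖B‖ * ‖f‖ := B.le_opNorm f
    _ ≤ M * 1 := by
      gcongr
      exact (norm_nonneg _).trans hB
    _ = M := mul_one M

end Ops

/-- Proposition (gradient bound for independent random walks): for integers `d, k ≥ 1` there is
`C = C(k,d)` such that for all `x ∈ (ℤ^d)^k` and `t ≥ 0`,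
`Σ_{z ∈ (ℤ^d)^k} |p_t^{rw}(x,z) − p_t^{rw}(x+e₁₁,z)| ≤ C / (√t + 1)`. -/
theorem rw_total_variation_gradient_bound (d k : ℕ) (hd : 1 ≤ d) (hk : 1 ≤ k) :
    ∃ C : ℝ, 0 < C ∧ ∀ x : Conf d k, ∀ t : ℝ, 0 ≤ t →
      Summable (fun z : Conf d k => |ptrw t x z - ptrw t (x + e11 d k) z|) ∧
      ∑' z : Conf d k, |ptrw t x z - ptrw t (x + e11 d k) z| ≤ C / (Real.sqrt t + 1) := by
  refine ⟨3, by norm_num, fun x t ht => ?_⟩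
  let U := Tr (e11 d k)
  let V : BF d k →L[ℝ] BF d k := ∑ g ∈ (SF d k).erase (e11 d k), Tr g
  let c : ℝ := ((SF d k).erase (e11 d k)).card
  have hL : LB d k = (U - 1) + (V - c • (1 : BF d k →L[ℝ] BF d k)) := by
    rw [LB, ← Finset.add_sum_erase _ _ (e11_mem hd hk), Finset.sum_sub_distrib, Finset.sum_const]
    simp only [U, V, c, Nat.cast_smul_eq_nsmul]
  have hV : ‖V‖ ≤ c := by
    refine (norm_sum_le_of_le _ fun g _ => Tr_norm g).trans ?_
    simp [c]
  have hUV : Commute U V := Commute.sum_right _ _ _ fun g _ => Tr_comm _ _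
  have hB := my_main t ht U V c (Tr_norm _) hV hUV
  rw [← hL] at hB
  have he : ∀ z, ptrw t x z - ptrw t (x + e11 d k) z
      = ((1 - U) * NormedSpace.exp (t • LB d k)) (dl z) x := by
    intro z
    rw [ptrw_eq, ptrw_eq]
    rfl
  simp only [he]
  have hs := sum_abs_le _ _ hB x
  exact ⟨summable_of_sum_le (fun _ => abs_nonneg _) hs,
    Real.tsum_le_of_sum_le (fun _ => abs_nonneg _) hs⟩

end SSEPPaper
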